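/- arXiv:1803.09676 — 4 statements merged into one kernel-verified Lean document; each statement's English description precedes it below -/
import Mathlib

section
/- Let E, F be real normed vector spaces, a_x, a_u class-𝒦 functions, and f : E → F → E satisfy ‖f(x¹,u) − f(x²,u)‖ ≤ a_x(‖x¹ − x²‖) and ‖f(x,u¹) − f(x,u²)‖ ≤ a_u(‖u¹ − u²‖) for all arguments. Let u : ℕ → F, let d : ℕ → F satisfy ‖d(j)‖ ≤ d̄ for all j, and let x, x̃ : ℕ → E be trajectories with x̃(0) = x(0), x(j+1) = f(x(j), u(j)) and x̃(j+1) = f(x̃(j), u(j) + d(j)). Then for every j ≥ 1, ‖x̃(j) − x(j)‖ ≤ β_{j−1}(d̄), where β_0(d) = a_u(d) and β_k(d) = a_u(d) + a_x(β_{k−1}(d)). -/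
open scoped NNReal

/-- A function `a : [0,∞) → [0,∞)` is of class 𝒦 if it is continuous,
strictly increasing, and satisfies `a 0 = 0`. -/
def IsClassK (a : ℝ≥0 → ℝ≥0) : Prop :=
  Continuous a ∧ StrictMono a ∧ a 0 = 0

/-- The sequence β_k defined by β_0 = a_u and β_k(d) = a_u(d) + a_x(β_{k-1}(d)). -/
def beta (au ax : ℝ≥0 → ℝ≥0) : ℕ → ℝ≥0 → ℝ≥0
  | 0, d => au d
  | k + 1, d => au d + ax (beta au ax k d)

/-- the deviation of the input-disturbed trajectory from the nominal
one is bounded by β_{j-1}(d̄) at every time j ≥ 1. -/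
theorem perturbed_trajectory_bound {E F : Type*}
    [NormedAddCommGroup E] [NormedSpace ℝ E] [NormedAddCommGroup F] [NormedSpace ℝ F]
    (ax au : ℝ≥0 → ℝ≥0) (hax : IsClassK ax) (hau : IsClassK au)
    (f : E → F → E)
    (hfx : ∀ (x1 x2 : E) (u : F), ‖f x1 u - f x2 u‖₊ ≤ ax ‖x1 - x2‖₊)
    (hfu : ∀ (x : E) (u1 u2 : F), ‖f x u1 - f x u2‖₊ ≤ au ‖u1 - u2‖₊)
    (u d : ℕ → F) (dbar : ℝ≥0) (hd : ∀ j, ‖d j‖₊ ≤ dbar)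
    (x xt : ℕ → E) (h0 : xt 0 = x 0)
    (hx : ∀ j, x (j + 1) = f (x j) (u j))
    (hxt : ∀ j, xt (j + 1) = f (xt j) (u j + d j)) :
    ∀ j : ℕ, 1 ≤ j → ‖xt j - x j‖₊ ≤ beta au ax (j - 1) dbar := by
  -- One step: the triangle inequality through `f (xt j) (u j)`.
  have step : ∀ j, ‖xt (j + 1) - x (j + 1)‖₊ ≤ au dbar + ax ‖xt j - x j‖₊ := by
    intro j
    rw [hx, hxt, ← sub_add_sub_cancel _ (f (xt j) (u j)) _]
    refine (nnnorm_add_le _ _).trans (add_le_add ((hfu _ _ _).trans ?_) (hfx _ _ _))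
    rw [add_sub_cancel_left]
    exact hau.2.1.monotone (hd j)
  intro j hj
  obtain ⟨k, rfl⟩ := Nat.exists_eq_add_of_le' hj
  rw [Nat.add_sub_cancel]
  clear hj
  induction k with
  | zero => simpa [beta, h0, hax.2.2] using step 0
  | succ k ih => exact (step (k + 1)).trans (add_le_add_right (hax.2.1.monotone ih) _)
end

section
/- Let E, F be real normed vector spaces, a_x, a_u class-𝒦 functions, and f : E → F → E satisfy ‖f(x¹,u) − f(x²,u)‖ ≤ a_x(‖x¹ − x²‖) and ‖f(x,u¹) − f(x,u²)‖ ≤ a_u(‖u¹ − u²‖) for all arguments. Let X_f ⊆ E be nonempty, let k_f ≥ 1, let u : ℕ → F, and let the nominal trajectory x(j+1) = f(x(j), u(j)) satisfy x(k_f) ∈ X_f. Let d : ℕ → F with ‖d(j)‖ ≤ d̄ and let x̃ be the perturbed trajectory with x̃(0) = x(0) and x̃(j+1) = f(x̃(j), u(j) + d(j)). Then the distance from x̃(k_f) to the set X_f satisfies Δ(x̃(k_f), X_f) ≤ β_{k_f−1}(d̄), where Δ(x, X) = inf_{y∈X} ‖x − y‖ and β_0(d) = a_u(d), β_k(d) =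 a_u(d) + a_x(β_{k−1}(d)). -/
/-!
The error `e j = ‖xt j - x j‖` satisfies `e (j + 1) ≤ a_u(d̄) + a_x(e j)`, by the triangle
inequality through `f (xt j) (u j)`. Since `e 0 = 0`, `a_x 0 = 0` and `a_x` is monotone,
induction gives `e (k + 1) ≤ β_k(d̄)`. The distance to `X_f` is at most the distance to the
point `x k_f` of `X_f`, that is, at most `e k_f`.
-/

open scoped NNReal

/-- if the nominal trajectory reaches the terminal set `X_f` at time `k_f`,
then the distance of the input-disturbed trajectory to `X_f` at time `k_f` is bounded
by β_{k_f-1}(d̄). -/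
theorem perturbed_terminal_distance_bound {E F : Type*}
    [NormedAddCommGroup E] [NormedSpace ℝ E] [NormedAddCommGroup F] [NormedSpace ℝ F]
    (ax au : ℝ≥0 → ℝ≥0) (hax : IsClassK ax) (hau : IsClassK au)
    (f : E → F → E)
    (hfx : ∀ (x1 x2 : E) (u : F), ‖f x1 u - f x2 u‖₊ ≤ ax ‖x1 - x2‖₊)
    (hfu : ∀ (x : E) (u1 u2 : F), ‖f x u1 - f x u2‖₊ ≤ au ‖u1 - u2‖₊)
    (Xf : Set E) (hXf : Xf.Nonempty) (kf : ℕ) (hkf : 1 ≤ kf)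
    (u d : ℕ → F) (dbar : ℝ≥0) (hd : ∀ j, ‖d j‖₊ ≤ dbar)
    (x xt : ℕ → E) (h0 : xt 0 = x 0)
    (hx : ∀ j, x (j + 1) = f (x j) (u j))
    (hterm : x kf ∈ Xf)
    (hxt : ∀ j, xt (j + 1) = f (xt j) (u j + d j)) :
    Metric.infNndist (xt kf) Xf ≤ beta au ax (kf - 1) dbar := by
  -- Compare both trajectories through the intermediate point `f (xt j) (u j)`.
  have step : ∀ j, ‖xt (j + 1) - x (j + 1)‖₊ ≤ au dbar + ax ‖xt j - x j‖₊ := by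
    intro j
    rw [hxt, hx, ← sub_add_sub_cancel _ (f (xt j) (u j)) _]
    refine (nnnorm_add_le _ _).trans (add_le_add ?_ (hfx _ _ _))
    refine (hfu _ _ _).trans (hau.2.1.monotone ?_)
    rw [add_sub_cancel_left]
    exact hd j
  have bound : ∀ k, ‖xt (k + 1) - x (k + 1)‖₊ ≤ beta au ax k dbar := by
    intro k
    induction k with
    | zero => simpa [h0, hax.2.2, beta] using step 0
    | succ k ih =>
      exact (step (k + 1)).trans (add_le_add le_rfl (hax.2.1.monotone ih))
  obtain ⟨k, rfl⟩ := Nat.exists_eq_add_of_le' hkf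
  rw [Nat.add_sub_cancel]
  refine le_trans ?_ (bound k)
  rw [← NNReal.coe_le_coe, Metric.coe_infNndist, coe_nnnorm, ← dist_eq_norm]
  exact Metric.infDist_le_dist_of_mem hterm
end

section
/- Let E, F be real normed vector spaces, f : E → F → E, and let U_c ⊆ F, X_c ⊆ E, X_f ⊆ E be constraint sets. Let L ≥ 1 and k_f be natural numbers with L dividing k_f, and let 0 ≤ k ≤ k_f − 2. Suppose the blocked input sequence v is feasible for the shrinking-horizon FHOCP at (x, k). Then: if L does not divide k + 1, the same sequence v is feasible at (f(x, v(1)), k+1); and if L divides k + 1, the shifted sequence v′(i) = v(i+1) is feasible at (f(x, v(1)), k+1). -/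
/-!
Under either choice of sequence at time `k + 1`, the input applied at step `j` is the one that `v`
prescribes at step `j + 1` from time `k`: writing `b(j,k) = ⌊(j+k)/L⌋ - ⌊k/L⌋ + 1`, the quotient
`⌊k/L⌋` is unchanged when `L ∤ k + 1` and grows by one when `L ∣ k + 1`, and the shift of `v`
compensates for the latter (`bIdx_succ_of_not_dvd`, `bIdx_succ_of_dvd`). Hence the new trajectory
is the tail of the old one (`traj_tail`), and the state and terminal constraints carry over. The
input constraints carry over because `N` is antitone in `k`, and because `N(k) = N(k+1) + 1` when
`L` divides both `k + 1` and `k_f`.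
-/

/-- The blocking index b(j,k) = ⌊(j + k − ⌊k/L⌋·L)/L⌋ + 1. -/
def bIdx (L j k : ℕ) : ℕ := (j + k - k / L * L) / L + 1

/-- The number of free (blocked) input values N(k) = ⌈(k_f − k)/L⌉. -/
def Nfree (L kf k : ℕ) : ℕ := (kf - k + L - 1) / L

/-- The nominal blocked-input trajectory x(j|k) from state x at time k:
x(0|k) = x and x(j+1|k) = f(x(j|k), v(b(j,k))). -/
def traj {E F : Type*} (f : E → F → E) (L : ℕ) (v : ℕ → F) (x : E) (k : ℕ) : ℕ → E
  | 0 => x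
  | j + 1 => f (traj f L v x k j) (v (bIdx L j k))

/-- A blocked input sequence v is feasible for the shrinking-horizon FHOCP at (x, k):
v(i) ∈ U_c for i = 1,…,N(k), the trajectory satisfies x(j|k) ∈ X_c for
j = 1,…,k_f − k, and x(k_f − k|k) ∈ X_f. -/
def Feasible {E F : Type*} (f : E → F → E) (Uc : Set F) (Xc Xf : Set E)
    (L kf : ℕ) (v : ℕ → F) (x : E) (k : ℕ) : Prop :=
  (∀ i, 1 ≤ i → i ≤ Nfree L kf k → v i ∈ Uc) ∧
  (∀ j, 1 ≤ j → j ≤ kf - k → traj f L v x k j ∈ Xc) ∧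
  traj f L v x k (kf - k) ∈ Xf

theorem bIdx_eq (L j k : ℕ) : bIdx L j k = (j + k) / L - k / L + 1 := by
  rw [bIdx, Nat.mul_comm, Nat.sub_mul_div]

theorem bIdx_zero (L k : ℕ) : bIdx L 0 k = 1 := by
  simp [bIdx_eq]

theorem bIdx_succ_of_not_dvd {L k : ℕ} (h : ¬ L ∣ k + 1) (j : ℕ) :
    bIdx L j (k + 1) = bIdx L (j + 1) k := by
  rw [bIdx_eq, bIdx_eq, Nat.succ_div_of_not_dvd h, Nat.add_right_comm j 1 k, Nat.add_assoc]

theorem bIdx_succ_of_dvd {L k : ℕ} (h : L ∣ k + 1) (j : ℕ) :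
    bIdx L j (k + 1) + 1 = bIdx L (j + 1) k := by
  -- Guarantees that the truncated subtraction in `bIdx_eq` at time `k + 1` is a true one.
  have hle : (k + 1) / L ≤ (j + (k + 1)) / L := Nat.div_le_div_right (Nat.le_add_left _ _)
  rw [bIdx_eq, bIdx_eq, Nat.add_right_comm j 1 k, Nat.add_assoc j k 1]
  rw [Nat.succ_div_of_dvd h] at hle ⊢
  omega

theorem Nfree_succ_le (L kf k : ℕ) : Nfree L kf (k + 1) ≤ Nfree L kf k :=
  Nat.div_le_div_right (by omega)

theorem Nfree_of_dvd {L kf k : ℕ} (hL : 1 ≤ L) (hdvd : L ∣ kf) (hk : k + 1 ≤ kf)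
    (h : L ∣ k + 1) : Nfree L kf k = Nfree L kf (k + 1) + 1 := by
  obtain ⟨m, hm⟩ := Nat.dvd_sub hdvd h
  have h₁ : Nfree L kf (k + 1) = m := by
    rw [Nfree, hm, Nat.add_sub_assoc hL, Nat.mul_add_div hL,
      Nat.div_eq_of_lt (by omega), Nat.add_zero]
  have h₂ : Nfree L kf k = m + 1 := by
    rw [Nfree, show kf - k + L - 1 = L * m + L by omega, Nat.mul_add_div hL, Nat.div_self hL]
  rw [h₁, h₂]

/-- If `w` from time `k + 1` applies the same inputs as `v` from time `k`, one step later, then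
its trajectory from the successor state is the tail of the trajectory of `v`. -/
theorem traj_tail {E F : Type*} (f : E → F → E) (L : ℕ) (v w : ℕ → F) (x : E) (k : ℕ)
    (h : ∀ j, w (bIdx L j (k + 1)) = v (bIdx L (j + 1) k)) (j : ℕ) :
    traj f L w (f x (v 1)) (k + 1) j = traj f L v x k (j + 1) := by
  induction j with
  | zero => simp [traj, bIdx_zero]
  | succ j ih => rw [traj, ih, h j, traj.eq_2 f L v x k (j + 1)]

theorem Feasible.tail {E F : Type*} {f : E → F → E} {Uc : Set F} {Xc Xf : Set E}
    {L kf k : ℕ} {v w : ℕ → F} {x : E} (hk : k + 1 ≤ kf)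
    (hfeas : Feasible f Uc Xc Xf L kf v x k)
    (hU : ∀ i, 1 ≤ i → i ≤ Nfree L kf (k + 1) → w i ∈ Uc)
    (h : ∀ j, w (bIdx L j (k + 1)) = v (bIdx L (j + 1) k)) :
    Feasible f Uc Xc Xf L kf w (f x (v 1)) (k + 1) := by
  obtain ⟨-, hX, hT⟩ := hfeas
  refine ⟨hU, fun j _ hj => ?_, ?_⟩
  · rw [traj_tail f L v w x k h]
    exact hX _ (by omega) (by omega)
  · rw [traj_tail f L v w x k h, show kf - (k + 1) + 1 = kf - k by omega]
    exact hT

/-- recursive feasibility step. If v is feasible at (x, k) with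
0 ≤ k ≤ k_f − 2, then v itself (if L ∤ k+1), resp. the shifted sequence
v′(i) = v(i+1) (if L ∣ k+1), is feasible at (f(x, v(1)), k+1). -/
theorem feasible_step {E F : Type*}
    [NormedAddCommGroup E] [NormedSpace ℝ E] [NormedAddCommGroup F] [NormedSpace ℝ F]
    (f : E → F → E) (Uc : Set F) (Xc Xf : Set E)
    (L kf : ℕ) (hL : 1 ≤ L) (hdvd : L ∣ kf)
    (k : ℕ) (hk : k + 2 ≤ kf)
    (v : ℕ → F) (x : E) (hfeas : Feasible f Uc Xc Xf L kf v x k) :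
    (¬ L ∣ (k + 1) → Feasible f Uc Xc Xf L kf v (f x (v 1)) (k + 1)) ∧
    (L ∣ (k + 1) → Feasible f Uc Xc Xf L kf (fun i => v (i + 1)) (f x (v 1)) (k + 1)) := by
  refine ⟨fun h => ?_, fun h => ?_⟩
  · exact hfeas.tail (by omega)
      (fun i hi hi' => hfeas.1 i hi (hi'.trans (Nfree_succ_le L kf k)))
      (fun j => congrArg v (bIdx_succ_of_not_dvd h j))
  · refine hfeas.tail (by omega) (fun i _ hi => hfeas.1 (i + 1) (by omega) ?_)
      (fun j => congrArg v (bIdx_succ_of_dvd h j))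
    rw [Nfree_of_dvd hL hdvd (by omega) h]
    omega
end

section
/- (Proposition 1, recursive feasibility and finite-time convergence of nominal SBPC.) Let E, F be real normed vector spaces, f : E → F → E, and let U_c ⊆ F, X_c ⊆ E, X_f ⊆ E be constraint sets. Let L ≥ 1 and k_f ≥ 1 with L dividing k_f, and suppose the shrinking-horizon FHOCP is feasible at (x₀, 0). Then there exist an input sequence u(0),…,u(k_f−1) and a trajectory x(0) = x₀, x(k+1) = f(x(k), u(k)), such that for every k = 0,…,k_f−1 there is a blocked input sequence v_k feasible for the shrinking-horizon FHOCP at (x(k), k) with u(k) = v_k(1), and the terminal state satisfies x(k_f) ∈ X_f. -/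
/-- Block boundaries do not move with time: block `b(j,k)` as numbered at time `k` is the block
containing the absolute time `k + j`. -/
lemma bIdx_add_div (L j k : ℕ) : bIdx L j k + k / L = bIdx L (k + j) 0 := by
  have h : (j + k - k / L * L) / L = (j + k) / L - k / L := by
    rw [mul_comm]
    exact Nat.sub_mul_div (j + k) L (k / L)
  have hle : k / L ≤ (j + k) / L := Nat.div_le_div_right (Nat.le_add_left k j)
  simp only [bIdx, h, Nat.zero_div, zero_mul, add_zero, Nat.sub_zero, Nat.add_comm k j]
  omega

/-- The tail of `v`, started from the state reached at time `k`, predicts the remainder of the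
trajectory of `v`. -/
lemma traj_shift {E F : Type*} (f : E → F → E) (L : ℕ) (v : ℕ → F) (x : E) (k j : ℕ) :
    traj f L (fun i => v (i + k / L)) (traj f L v x 0 k) k j = traj f L v x 0 (k + j) := by
  induction j with
  | zero => rfl
  | succ j ih =>
    rw [← Nat.add_assoc]
    simp only [traj, ih, bIdx_add_div]

/-- The tail at time `k` uses no values of `v` beyond the `N(0)` free ones. -/
lemma add_div_le_Nfree {L kf k i : ℕ} (hL : 1 ≤ L) (hk : k ≤ kf) (hi : i ≤ Nfree L kf k) :
    i + k / L ≤ Nfree L kf 0 := by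
  unfold Nfree at *
  rw [Nat.le_div_iff_mul_le hL] at *
  have := Nat.div_mul_le_self k L
  rw [add_mul]
  omega

/-- Recursive feasibility: the tail of a sequence feasible at time `0` is feasible at time `k`. -/
lemma Feasible.shift {E F : Type*} {f : E → F → E} {Uc : Set F} {Xc Xf : Set E}
    {L kf k : ℕ} {v : ℕ → F} {x : E} (hL : 1 ≤ L) (hk : k ≤ kf)
    (h : Feasible f Uc Xc Xf L kf v x 0) :
    Feasible f Uc Xc Xf L kf (fun i => v (i + k / L)) (traj f L v x 0 k) k := by
  obtain ⟨hU, hX, hf⟩ := h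
  refine ⟨fun i h1 hi => hU _ (Nat.le_add_right_of_le h1) (add_div_le_Nfree hL hk hi),
    fun j h1 hj => ?_, ?_⟩
  · rw [traj_shift]
    exact hX _ (by omega) (by omega)
  · rw [traj_shift, Nat.add_sub_cancel' hk]
    exact hf

/-- Proposition 1: recursive feasibility and finite-time convergence of
nominal SBPC. If the shrinking-horizon FHOCP is feasible at (x₀, 0), then there exist
an input sequence and a closed-loop trajectory starting at x₀ such that at every time
k = 0,…,k_f − 1 some blocked sequence v_k is feasible at (x(k), k) with u(k) = v_k(1),
and the terminal state satisfies x(k_f) ∈ X_f. -/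
theorem nominal_SBPC_convergence {E F : Type*}
    [NormedAddCommGroup E] [NormedSpace ℝ E] [NormedAddCommGroup F] [NormedSpace ℝ F]
    (f : E → F → E) (Uc : Set F) (Xc Xf : Set E)
    (L kf : ℕ) (hL : 1 ≤ L) (hkf : 1 ≤ kf) (hdvd : L ∣ kf)
    (x0 : E) (hfeas0 : ∃ v : ℕ → F, Feasible f Uc Xc Xf L kf v x0 0) :
    ∃ (u : ℕ → F) (x : ℕ → E),
      x 0 = x0 ∧
      (∀ k < kf, x (k + 1) = f (x k) (u k)) ∧
      (∀ k < kf, ∃ v : ℕ → F, Feasible f Uc Xc Xf L kf v (x k) k ∧ u k = v 1) ∧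
      x kf ∈ Xf := by
  obtain ⟨v, hv⟩ := hfeas0
  refine ⟨fun k => v (bIdx L k 0), traj f L v x0 0, rfl, fun k _ => rfl,
    fun k hk => ⟨_, hv.shift hL hk.le, ?_⟩, hv.2.2⟩
  simp [bIdx, Nat.add_comm]
end
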